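/- Each of the eight operators S_{j1}, …, S_{j8} is a partial isometry (S S* S = S), and together they satisfy the Choi–Kraus normalization Σ_{k=1}^{8} S_{jk}* S_{jk} = 1, where 1 is the identity operator on H (this is the quantum-channel condition for the Hamiltonian path H₆ of G(Π₃)). -/

import Mathlib

/- Hilbert space `H = ℓ²(ℕ₊, ℂ)` with standard orthonormal basis `(e m)` indexed by the
positive integers `ℕ+`. -/

noncomputable section

open ContinuousLinearMap

/-- The Hilbert space `ℓ²(ℕ₊, ℂ)` of square-summable complex sequences indexed by the
positive integers. -/
abbrev H : Type := lp (fun _ : ℕ+ => ℂ) 2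

/-- The standard orthonormal basis vector `e m` of `H`, for `m ≥ 1`. -/
def e (m : ℕ+) : H := lp.single 2 m 1

/-- `MapsBasis S a b` says that the bounded operator `S` sends the basis vector `e (a n)` to
`e (b n)` for every `n ≥ 1`, and sends to `0` every basis vector not of the form `e (a n)`;
i.e. `S = Σ_{n ≥ 1} E_{b n, a n}` as in the paper. -/
def MapsBasis (S : H →L[ℂ] H) (a b : ℕ+ → ℕ+) : Prop :=
  (∀ n : ℕ+, S (e (a n)) = e (b n)) ∧ ∀ m : ℕ+, (∀ n : ℕ+, m ≠ a n) → S (e m) = 0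

lemma e_inner (m : ℕ+) (x : H) : inner ℂ (e m) x = x m := by
  simp [e, lp.inner_single_left]

lemma e_apply (m k : ℕ+) : (e m : H) k = if m = k then 1 else 0 := by
  unfold e
  rw [lp.single_apply, Pi.single_apply]
  simp [eq_comm]

lemma op_ext {S T : H →L[ℂ] H} (h : ∀ m, S (e m) = T (e m)) : S = T := by
  refine lp.ext_continuousLinearMap (by norm_num) fun m => ?_
  ext
  simpa [e] using congrArg (fun v : H => v _) (h m)

lemma key {S : H →L[ℂ] H} {a b : ℕ+ → ℕ+} (h : MapsBasis S a b)
    (hb : Function.Injective b) (r : ℕ)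
    (hr : ∀ m : ℕ+, (∃ n, m = a n) ↔ (m : ℕ) % 8 = r) (m : ℕ+) :
    adjoint S (S (e m)) = if (m : ℕ) % 8 = r then e m else 0 := by
  split_ifs with hm
  · obtain ⟨n, rfl⟩ := (hr m).2 hm
    rw [h.1]
    ext k
    rw [← e_inner, adjoint_inner_right, e_apply]
    by_cases hk : ∃ l, k = a l
    · obtain ⟨l, rfl⟩ := hk
      rw [h.1, e_inner, e_apply]
      by_cases hnl : n = l
      · simp [hnl]
      · have h1 : b n ≠ b l := fun q => hnl (hb q)
        have h2 : a n ≠ a l := by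
          intro q
          have := h.1 n
          rw [q, h.1 l] at this
          have := congrArg (fun v : H => v (b n)) this
          simp [e_apply, h1.symm] at this
        simp [h1, h2]
    · have h2 : a n ≠ k := fun q => hk ⟨n, q.symm⟩
      rw [h.2 k (by simpa using hk)]
      simp [h2]
  · rw [h.2 m (fun n hn => hm ((hr m).1 ⟨n, hn⟩))]
    simp

lemma pisom {S : H →L[ℂ] H} {r : ℕ} {a b : ℕ+ → ℕ+} (h : MapsBasis S a b)
    (hr : ∀ m : ℕ+, (∃ n, m = a n) ↔ (m : ℕ) % 8 = r)
    (hk : ∀ m : ℕ+, adjoint S (S (e m)) = if (m : ℕ) % 8 = r then e m else 0) :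
    S ∘L adjoint S ∘L S = S := by
  refine op_ext fun m => ?_
  simp only [comp_apply, hk]
  split_ifs with hm
  · rfl
  · rw [h.2 m (fun n hn => hm ((hr m).1 ⟨n, hn⟩))]
    simp

lemma sub_val (c d : ℕ+) (hcd : d < c) (n : ℕ+) :
    ((c * n - d : ℕ+) : ℕ) = c * n - d := by
  have h1 : (d : ℕ) < c := hcd
  have h2 : (c : ℕ) ≤ c * n := Nat.le_mul_of_pos_right _ n.pos
  have : d < c * n := by
    rw [← PNat.coe_lt_coe, PNat.mul_coe]; omega
  rw [PNat.sub_coe, if_pos this, PNat.mul_coe]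

lemma sub_inj (c d : ℕ+) (hcd : d < c) : Function.Injective fun n : ℕ+ => c * n - d := by
  intro n l hnl
  have q := congrArg (fun t : ℕ+ => (t : ℕ)) hnl
  simp only [sub_val c d hcd] at q
  have h1 : (d : ℕ) < c := hcd
  have h2 : (c : ℕ) ≤ c * n := Nat.le_mul_of_pos_right _ n.pos
  have h3 : (c : ℕ) ≤ c * l := Nat.le_mul_of_pos_right _ l.pos
  have h4 : (c : ℕ) * n = c * l := by omega
  exact PNat.coe_injective (Nat.eq_of_mul_eq_mul_left c.pos h4)

lemma sub_range (d : ℕ+) (hd : d < 8) (m : ℕ+) :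
    (∃ n : ℕ+, m = 8 * n - d) ↔ (m : ℕ) % 8 = 8 - (d : ℕ) := by
  have h1 : (d : ℕ) < 8 := hd
  have h0 := d.pos
  have hm := m.pos
  constructor
  · rintro ⟨n, rfl⟩
    have hn := n.pos
    rw [sub_val 8 d hd]
    simp only [PNat.val_ofNat]
    omega
  · intro h
    refine ⟨Nat.toPNat ((m + d) / 8) (by omega), PNat.coe_injective ?_⟩
    rw [sub_val 8 d hd]
    simp only [PNat.val_ofNat, Nat.toPNat, PNat.mk_coe]
    omega

lemma mul_range (m : ℕ+) :
    (∃ n : ℕ+, m = 8 * n) ↔ (m : ℕ) % 8 = 0 := by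
  have hm := m.pos
  constructor
  · rintro ⟨n, rfl⟩
    simp
  · intro h
    refine ⟨Nat.toPNat (m / 8) (by omega), PNat.coe_injective ?_⟩
    rw [PNat.mul_coe]
    simp only [PNat.val_ofNat, Nat.toPNat, PNat.mk_coe]
    omega

/-- Each of `S_{j1}, …, S_{j8}` is a partial isometry and `Σₖ S_{jk}* S_{jk} = 1` (the quantum-channel condition for the Hamiltonian path `H₆` of `G(Π₃)`). -/
theorem stmt_14
    (Sj1 Sj2 Sj3 Sj4 Sj5 Sj6 Sj7 Sj8 : H →L[ℂ] H)
    (hSj1 : MapsBasis Sj1 (fun n => 8 * n - 3) (fun n => 32 * n - 15))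
    (hSj2 : MapsBasis Sj2 (fun n => 8 * n - 2) (fun n => 48 * n - 35))
    (hSj3 : MapsBasis Sj3 (fun n => 8 * n) (fun n => 48 * n - 10))
    (hSj4 : MapsBasis Sj4 (fun n => 8 * n - 1) (fun n => 40 * n - 32))
    (hSj5 : MapsBasis Sj5 (fun n => 8 * n - 4) (fun n => 40 * n - 1))
    (hSj6 : MapsBasis Sj6 (fun n => 8 * n - 5) (fun n => 32 * n - 28))
    (hSj7 : MapsBasis Sj7 (fun n => 8 * n - 6) (fun n => 24 * n - 21))
    (hSj8 : MapsBasis Sj8 (fun n => 8 * n - 7) (fun n => 24 * n - 22)) :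
    (Sj1 ∘L adjoint Sj1 ∘L Sj1 = Sj1 ∧
    Sj2 ∘L adjoint Sj2 ∘L Sj2 = Sj2 ∧
    Sj3 ∘L adjoint Sj3 ∘L Sj3 = Sj3 ∧
    Sj4 ∘L adjoint Sj4 ∘L Sj4 = Sj4 ∧
    Sj5 ∘L adjoint Sj5 ∘L Sj5 = Sj5 ∧
    Sj6 ∘L adjoint Sj6 ∘L Sj6 = Sj6 ∧
    Sj7 ∘L adjoint Sj7 ∘L Sj7 = Sj7 ∧
    Sj8 ∘L adjoint Sj8 ∘L Sj8 = Sj8) ∧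
    adjoint Sj1 ∘L Sj1 + adjoint Sj2 ∘L Sj2 + adjoint Sj3 ∘L Sj3 + adjoint Sj4 ∘L Sj4 + adjoint Sj5 ∘L Sj5 + adjoint Sj6 ∘L Sj6 + adjoint Sj7 ∘L Sj7 + adjoint Sj8 ∘L Sj8 = 1 := by
  have k1 := key hSj1 (sub_inj 32 15 (by decide)) _ (sub_range 3 (by decide))
  have k2 := key hSj2 (sub_inj 48 35 (by decide)) _ (sub_range 2 (by decide))
  have k3 := key hSj3 (sub_inj 48 10 (by decide)) _ mul_range
  have k4 := key hSj4 (sub_inj 40 32 (by decide)) _ (sub_range 1 (by decide))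
  have k5 := key hSj5 (sub_inj 40 1 (by decide)) _ (sub_range 4 (by decide))
  have k6 := key hSj6 (sub_inj 32 28 (by decide)) _ (sub_range 5 (by decide))
  have k7 := key hSj7 (sub_inj 24 21 (by decide)) _ (sub_range 6 (by decide))
  have k8 := key hSj8 (sub_inj 24 22 (by decide)) _ (sub_range 7 (by decide))
  refine ⟨⟨pisom hSj1 (sub_range 3 (by decide)) k1, pisom hSj2 (sub_range 2 (by decide)) k2,
    pisom hSj3 mul_range k3, pisom hSj4 (sub_range 1 (by decide)) k4,
    pisom hSj5 (sub_range 4 (by decide)) k5, pisom hSj6 (sub_range 5 (by decide)) k6,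
    pisom hSj7 (sub_range 6 (by decide)) k7, pisom hSj8 (sub_range 7 (by decide)) k8⟩, ?_⟩
  refine op_ext fun m => ?_
  simp only [add_apply, comp_apply, k1, k2, k3, k4, k5, k6, k7, k8, PNat.val_ofNat]
  have hlt : (m : ℕ) % 8 < 8 := Nat.mod_lt _ (by norm_num)
  generalize (m : ℕ) % 8 = t at hlt
  interval_cases t <;> simp
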